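/- arXiv:0707.3730 — 12 statements merged into one kernel-verified Lean document; each statement's English description precedes it below -/
import Mathlib

section
/- Let Q(α,β) : ℂ⁴ → ℂ be a two-parameter family of affine linear functions which is D₄-symmetric, i.e. there exist signs ε,σ ∈ {1,−1} with Q(α,β)(x,y,z,w) = ε·Q(β,α)(x,z,y,w) = σ·Q(α,β)(y,x,w,z), and let h(α,β)(x,y) denote the common value of Q·Q_{zw} − Q_z·Q_w (which is independent of z,w) and G(α,β)(x,w) the common value of Q·Q_{yz} − Q_y·Q_z (which is independent of y,z). Then at every point (x,y,z,w) ∈ ℂ⁴ with Q(α,β)(x,y,z,w) = 0 one has h(α,β)(x,y)·h(α,β)(z,w) = h(β,α)(x,z)·h(β,α)(y,w) = G(α,β)(x,w)·G(α,β)(y,z). -/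
/-!
Where `Q` vanishes, each biquadratic reduces to minus a product of two first partial derivatives.
The square symmetries of `Q` allow each of the six biquadratic values in the statement to be computed
at a permutation of the one point `(x,y,z,w)`, so that (the signs squaring to one)
* `h(α,β)(x,y) = -Q_z Q_w` and `h(α,β)(z,w) = -Q_x Q_y`,
* `h(β,α)(x,z) = -Q_y Q_w` and `h(β,α)(y,w) = -Q_x Q_z`,
* `G(α,β)(x,w) = -Q_y Q_z` and `G(α,β)(y,z) = -Q_x Q_w`,

with all derivatives of `Q = Q(α,β)` at `(x,y,z,w)`. All three products equal `Q_x Q_y Q_z Q_w`.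
-/


noncomputable section

/-- `Q : ℂ⁴ → ℂ` is affine linear: a polynomial of degree at most one
in each of its four arguments separately. -/
def AffLin (Q : ℂ → ℂ → ℂ → ℂ → ℂ) : Prop :=
  ∃ c : Fin 2 → Fin 2 → Fin 2 → Fin 2 → ℂ, ∀ x y z w : ℂ,
    Q x y z w = ∑ i : Fin 2, ∑ j : Fin 2, ∑ k : Fin 2, ∑ l : Fin 2,
      c i j k l * x ^ (i : ℕ) * y ^ (j : ℕ) * z ^ (k : ℕ) * w ^ (l : ℕ)

/-- partial derivative with respect to the first argument. -/
def pX (Q : ℂ → ℂ → ℂ → ℂ → ℂ) (x y z w : ℂ) : ℂ := deriv (fun t => Q t y z w) x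
/-- partial derivative with respect to the second argument. -/
def pY (Q : ℂ → ℂ → ℂ → ℂ → ℂ) (x y z w : ℂ) : ℂ := deriv (fun t => Q x t z w) y
/-- partial derivative with respect to the third argument. -/
def pZ (Q : ℂ → ℂ → ℂ → ℂ → ℂ) (x y z w : ℂ) : ℂ := deriv (fun t => Q x y t w) z
/-- partial derivative with respect to the fourth argument. -/
def pW (Q : ℂ → ℂ → ℂ → ℂ → ℂ) (x y z w : ℂ) : ℂ := deriv (fun t => Q x y z t) w

def pZW (Q : ℂ → ℂ → ℂ → ℂ → ℂ) (x y z w : ℂ) : ℂ := deriv (fun t => pW Q x y t w) z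
def pYW (Q : ℂ → ℂ → ℂ → ℂ → ℂ) (x y z w : ℂ) : ℂ := deriv (fun t => pW Q x t z w) y
def pXY (Q : ℂ → ℂ → ℂ → ℂ → ℂ) (x y z w : ℂ) : ℂ := deriv (fun t => pY Q t y z w) x
def pXZ (Q : ℂ → ℂ → ℂ → ℂ → ℂ) (x y z w : ℂ) : ℂ := deriv (fun t => pZ Q t y z w) x
def pYZ (Q : ℂ → ℂ → ℂ → ℂ → ℂ) (x y z w : ℂ) : ℂ := deriv (fun t => pZ Q x t z w) y
def pXW (Q : ℂ → ℂ → ℂ → ℂ → ℂ) (x y z w : ℂ) : ℂ := deriv (fun t => pW Q t y z w) x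

/-- h = Q·Q_{zw} − Q_z·Q_w -/
def hE (Q : ℂ → ℂ → ℂ → ℂ → ℂ) (x y z w : ℂ) : ℂ :=
  Q x y z w * pZW Q x y z w - pZ Q x y z w * pW Q x y z w
/-- h₁ = Q·Q_{yw} − Q_y·Q_w -/
def h1E (Q : ℂ → ℂ → ℂ → ℂ → ℂ) (x y z w : ℂ) : ℂ :=
  Q x y z w * pYW Q x y z w - pY Q x y z w * pW Q x y z w
/-- h₂ = Q·Q_{xy} − Q_x·Q_y -/
def h2E (Q : ℂ → ℂ → ℂ → ℂ → ℂ) (x y z w : ℂ) : ℂ :=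
  Q x y z w * pXY Q x y z w - pX Q x y z w * pY Q x y z w
/-- h₃ = Q·Q_{xz} − Q_x·Q_z -/
def h3E (Q : ℂ → ℂ → ℂ → ℂ → ℂ) (x y z w : ℂ) : ℂ :=
  Q x y z w * pXZ Q x y z w - pX Q x y z w * pZ Q x y z w
/-- G = Q·Q_{yz} − Q_y·Q_z -/
def GE (Q : ℂ → ℂ → ℂ → ℂ → ℂ) (x y z w : ℂ) : ℂ :=
  Q x y z w * pYZ Q x y z w - pY Q x y z w * pZ Q x y z w
/-- G₁ = Q·Q_{xw} − Q_x·Q_w -/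
def G1E (Q : ℂ → ℂ → ℂ → ℂ → ℂ) (x y z w : ℂ) : ℂ :=
  Q x y z w * pXW Q x y z w - pX Q x y z w * pW Q x y z w

/-- A two-parameter family `Q(α,β)` possesses the D₄ symmetry (symmetries of the square):
there are signs ε, σ ∈ {1,−1} with
`Q(α,β)(x,y,z,w) = ε·Q(β,α)(x,z,y,w) = σ·Q(α,β)(y,x,w,z)`. -/
def D4Sym (Q : ℂ → ℂ → ℂ → ℂ → ℂ → ℂ → ℂ) : Prop :=
  ∃ ε σ : ℂ, (ε = 1 ∨ ε = -1) ∧ (σ = 1 ∨ σ = -1) ∧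
    ∀ α β x y z w : ℂ,
      Q α β x y z w = ε * Q β α x z y w ∧ Q α β x y z w = σ * Q α β y x w z

/-- for an affine linear D₄-symmetric family with biquadratics
`h(α,β)(x,y)` (the common value of `Q·Q_{zw} − Q_z·Q_w`) and `G(α,β)(x,w)`
(the common value of `Q·Q_{yz} − Q_y·Q_z`), on the zero set of `Q` one has
`h(α,β)(x,y)·h(α,β)(z,w) = h(β,α)(x,z)·h(β,α)(y,w) = G(α,β)(x,w)·G(α,β)(y,z)`. -/
theorem statement4 (Q : ℂ → ℂ → ℂ → ℂ → ℂ → ℂ → ℂ)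
    (hA : ∀ α β : ℂ, AffLin (Q α β)) (hD4 : D4Sym Q)
    (h G : ℂ → ℂ → ℂ → ℂ → ℂ)
    (hh : ∀ α β x y z w : ℂ, hE (Q α β) x y z w = h α β x y)
    (hG : ∀ α β x y z w : ℂ, GE (Q α β) x y z w = G α β x w) :
    ∀ α β x y z w : ℂ, Q α β x y z w = 0 →
      h α β x y * h α β z w = h β α x z * h β α y w ∧
      h β α x z * h β α y w = G α β x w * G α β y z := by
  obtain ⟨ε, σ, hε, hσ, hs⟩ := hD4
  have hε2 : ε * ε = 1 := by rcases hε with rfl | rfl <;> norm_num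
  have hσ2 : σ * σ = 1 := by rcases hσ with rfl | rfl <;> norm_num
  intro α β x y z w h0
  have s1 : ∀ x y z w, Q β α x z y w = ε * Q α β x y z w := fun x y z w => (hs β α x z y w).1
  have s2 : ∀ x y z w, Q α β y x w z = σ * Q α β x y z w := fun x y z w => (hs α β y x w z).2
  have s3 : ∀ x y z w, Q β α y w x z = ε * σ * Q α β x y z w := fun x y z w => by
    rw [s1 y x w z, s2 x y z w, mul_assoc]
  -- The half-turn of the square is the composite of two transpositions and two `σ`-reflections.
  have s4 : ∀ x y z w, Q α β z w x y = σ * Q α β x y z w := fun x y z w => by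
    rw [(hs α β z w x y).1, (hs β α z x w y).2, s1 x y z w]
    linear_combination σ * Q α β x y z w * hε2
  have e1 : h α β x y = -(pZ (Q α β) x y z w * pW (Q α β) x y z w) := by
    rw [← hh α β x y z w, hE, h0]; ring
  have e2 : h α β z w = -(pX (Q α β) x y z w * pY (Q α β) x y z w) := by
    rw [← hh α β z w x y, hE, s4 x y z w, h0]
    simp only [pZ, pW, pX, pY, s4 _ y z w, s4 x _ z w, deriv_const_mul_field]
    linear_combination
      -(deriv (fun t => Q α β t y z w) x * deriv (fun t => Q α β x t z w) y) * hσ2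
  have e3 : h β α x z = -(pY (Q α β) x y z w * pW (Q α β) x y z w) := by
    rw [← hh β α x z y w, hE, s1 x y z w, h0]
    simp only [pZ, pW, pY, s1 x _ z w, s1 x y z _, deriv_const_mul_field]
    linear_combination
      -(deriv (fun t => Q α β x t z w) y * deriv (fun t => Q α β x y z t) w) * hε2
  have e4 : h β α y w = -(pX (Q α β) x y z w * pZ (Q α β) x y z w) := by
    rw [← hh β α y w x z, hE, s3 x y z w, h0]
    simp only [pZ, pW, pX, s3 _ y z w, s3 x y _ w, deriv_const_mul_field]
    linear_combination
      -(deriv (fun t => Q α β t y z w) x * deriv (fun t => Q α β x y t w) z) * (σ * σ * hε2 + hσ2)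
  have e5 : G α β x w = -(pY (Q α β) x y z w * pZ (Q α β) x y z w) := by
    rw [← hG α β x y z w, GE, h0]; ring
  have e6 : G α β y z = -(pX (Q α β) x y z w * pW (Q α β) x y z w) := by
    rw [← hG α β y x w z, GE, s2 x y z w, h0]
    simp only [pY, pZ, pX, pW, s2 _ y z w, s2 x y z _, deriv_const_mul_field]
    linear_combination
      -(deriv (fun t => Q α β t y z w) x * deriv (fun t => Q α β x y z t) w) * hσ2
  rw [e1, e2, e3, e4, e5, e6]
  constructor <;> ring
end
end

section
/- Let Q : ℂ⁴ → ℂ be affine linear and D₄-symmetric for fixed parameters, with symmetric biquadratics h(x,y) (the common value of Q·Q_{zw} − Q_z·Q_w) and G(x,w) (the common value of Q·Q_{yz} − Q_y·Q_z). Suppose the relation h(x,y)·h(z,w) − G(x,w)·G(y,z) = 0 holds identically for all (x,y,z,w) ∈ ℂ⁴ (not merely on the zero set of Q). Then there exists a one-variable polynomial p of degree at most two and a sign s ∈ {1,−1} such that h(x,y) = p(x)·p(y) and G(x,y) = s·p(x)·p(y) for all x,y ∈ ℂ. -/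
/-!
The identity alone forces the factorization. If `h` does not vanish at some `(a, b)`, the identity
at `(a, b, b, a)` and at `(a, a, a, a)` gives `G(a,a) ≠ 0` and `G(a,a) = s·h(a,a)` with `s = ±1`.
Freezing two arguments at `a` then expresses `h(x,y)` and `G(x,y)` through `G(x,a)·G(y,a)`, so
`p(x) = G(x,a)/√(h(a,a))` works. The lemma `exists_factor` carries this out; `GE_quadratic` uses
the affine linearity of `Q` to see that `x ↦ G(x,a)` is a polynomial of degree at most two.
-/


noncomputable section

lemma deriv_of_affine {f : ℂ → ℂ} (u v : ℂ) (hf : ∀ t, f t = u + v * t) (x : ℂ) :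
    deriv f x = v := by
  have h1 : f = fun t => u + v * t := funext hf
  rw [h1]
  simp

/-- Evaluated at `y = z = 0`, the biquadratic `G = Q·Q_{yz} − Q_y·Q_z` is a polynomial of degree
at most two in its first argument. -/
lemma GE_quadratic {Q : ℂ → ℂ → ℂ → ℂ → ℂ} (hQ : AffLin Q) (a : ℂ) :
    ∃ c₀ c₁ c₂ : ℂ, ∀ x, GE Q x 0 0 a = c₀ + c₁ * x + c₂ * x ^ 2 := by
  obtain ⟨c, hc⟩ := hQ
  -- `Q x y z a = ∑ (e j k + f j k * x) y^j z^k` with the following coefficients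
  let e : Fin 2 → Fin 2 → ℂ := fun j k => c 0 j k 0 + c 0 j k 1 * a
  let f : Fin 2 → Fin 2 → ℂ := fun j k => c 1 j k 0 + c 1 j k 1 * a
  have hq : ∀ x y z, Q x y z a = (e 0 0 + f 0 0 * x) + (e 1 0 + f 1 0 * x) * y
      + (e 0 1 + f 0 1 * x) * z + (e 1 1 + f 1 1 * x) * y * z := by
    intro x y z
    rw [hc]
    simp only [Fin.sum_univ_two, e, f, Fin.val_zero, Fin.val_one, pow_zero, pow_one]
    ring
  have hZ : ∀ x y z, pZ Q x y z a = (e 0 1 + f 0 1 * x) + (e 1 1 + f 1 1 * x) * y := by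
    intro x y z
    refine deriv_of_affine ((e 0 0 + f 0 0 * x) + (e 1 0 + f 1 0 * x) * y) _ (fun t => ?_) z
    rw [hq]; ring
  have hY : ∀ x y z, pY Q x y z a = (e 1 0 + f 1 0 * x) + (e 1 1 + f 1 1 * x) * z := by
    intro x y z
    refine deriv_of_affine ((e 0 0 + f 0 0 * x) + (e 0 1 + f 0 1 * x) * z) _ (fun t => ?_) y
    rw [hq]; ring
  have hYZ : ∀ x y z, pYZ Q x y z a = e 1 1 + f 1 1 * x :=
    fun x y z => deriv_of_affine (e 0 1 + f 0 1 * x) _ (fun t => hZ x t z) y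
  refine ⟨e 0 0 * e 1 1 - e 1 0 * e 0 1,
    e 0 0 * f 1 1 + f 0 0 * e 1 1 - e 1 0 * f 0 1 - f 1 0 * e 0 1,
    f 0 0 * f 1 1 - f 1 0 * f 0 1, fun x => ?_⟩
  rw [GE, hq, hYZ, hY, hZ]
  ring

/-- Functions with `h` symmetric and `h(x,y)h(z,w) = G(x,w)G(y,z)` factor through a single slice of `G`,
up to a scalar `k` (which is `0` exactly in the trivial case `h = 0`). -/
lemma exists_factor {h G : ℂ → ℂ → ℂ} (hsym : ∀ x y, h x y = h y x)
    (hid : ∀ x y z w, h x y * h z w = G x w * G y z) :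
    ∃ a k s : ℂ, (s = 1 ∨ s = -1) ∧ (∀ x y, h x y = (k * G x a) * (k * G y a)) ∧
      ∀ x y, G x y = s * (k * G x a) * (k * G y a) := by
  by_cases h0 : ∀ x y, h x y = 0
  · have G0 : ∀ x y, G x y = 0 := fun x y => by
      have := hid x x y y
      rw [h0, zero_mul] at this
      simpa using this.symm
    exact ⟨0, 0, 1, Or.inl rfl, fun x y => by simp [h0], fun x y => by simp [G0]⟩
  push Not at h0
  obtain ⟨a, b, hab⟩ := h0
  have hGa : G a a ≠ 0 := by
    intro hz
    have := hid a b b a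
    rw [← hsym a b, hz, zero_mul] at this
    exact hab (mul_self_eq_zero.mp this)
  obtain ⟨s, hs, hGs⟩ : ∃ s : ℂ, (s = 1 ∨ s = -1) ∧ G a a = s * h a a := by
    rcases mul_self_eq_mul_self_iff.mp (hid a a a a) with H | H
    · exact ⟨1, Or.inl rfl, by rw [H, one_mul]⟩
    · exact ⟨-1, Or.inr rfl, by rw [H]; ring⟩
  have hss : s * s = 1 := by rcases hs with rfl | rfl <;> norm_num
  have hc : h a a ≠ 0 := fun hz => hGa (by rw [hGs, hz, mul_zero])
  obtain ⟨r, hr⟩ : ∃ r : ℂ, h a a = r * r := by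
    exact IsAlgClosed.exists_eq_mul_self (h a a)
  have hr0 : r ≠ 0 := fun hz => hc (by rw [hr, hz, zero_mul])
  have hxa : ∀ x, h x a = s * G x a := fun x => by
    have := hid x a a a
    rw [hGs] at this
    exact mul_right_cancel₀ hc (by rw [this]; ring)
  refine ⟨a, r⁻¹, s, hs, fun x y => ?_, fun x y => ?_⟩
  · have := hid x y a a
    rw [hr] at this
    field_simp
    linear_combination this
  · have := hid x a a y
    rw [hsym a y, hxa, hxa, hGs, hr] at this
    field_simp
    linear_combination (-s) * this + (G x a * G y a * s - G x y * r ^ 2) * hss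

/-- linearization condition: if the relation
`h(x,y)·h(z,w) − G(x,w)·G(y,z) = 0` holds identically (not merely on the zero set
of `Q`), then the biquadratics factorize: `h(x,y) = p(x)·p(y)` and
`G(x,y) = ±p(x)·p(y)` for a one-variable polynomial `p` of degree at most two. -/
theorem statement6 (Q : ℂ → ℂ → ℂ → ℂ → ℂ → ℂ → ℂ)
    (hA : ∀ α β : ℂ, AffLin (Q α β)) (hD4 : D4Sym Q)
    (α β : ℂ) (h G : ℂ → ℂ → ℂ)
    (hh : ∀ x y z w : ℂ, hE (Q α β) x y z w = h x y)
    (hG : ∀ x y z w : ℂ, GE (Q α β) x y z w = G x w)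
    (hsym : ∀ x y : ℂ, h x y = h y x)
    (Gsym : ∀ x y : ℂ, G x y = G y x)
    (hid : ∀ x y z w : ℂ, h x y * h z w - G x w * G y z = 0) :
    ∃ p : ℂ → ℂ, (∃ c : Fin 3 → ℂ, ∀ t : ℂ, p t = ∑ i : Fin 3, c i * t ^ (i : ℕ)) ∧
      ∃ s : ℂ, (s = 1 ∨ s = -1) ∧
        (∀ x y : ℂ, h x y = p x * p y) ∧
        (∀ x y : ℂ, G x y = s * p x * p y) := by
  obtain ⟨a, k, s, hs, hp, hp'⟩ :=
    exists_factor hsym fun x y z w => sub_eq_zero.mp (hid x y z w)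
  obtain ⟨c₀, c₁, c₂, hc⟩ := GE_quadratic (hA α β) a
  refine ⟨fun x => k * G x a, ⟨![k * c₀, k * c₁, k * c₂], fun t => ?_⟩, s, hs, hp, hp'⟩
  simp only [Fin.sum_univ_three]
  rw [← hG t 0 0 a, hc]
  simp
  ring
end
end

section
/- Let Q(α,β) : ℂ⁴ → ℂ be a two-parameter family of affine linear D₄-symmetric functions with biquadratics h(α,β)(x,y) (the common value of Q·Q_{zw} − Q_z·Q_w). Let u : ℤ² → ℂ satisfy Q(α,β)(u(n,m), u(n+1,m), u(n,m+1), u(n+1,m+1)) = 0 for all (n,m) ∈ ℤ². Define the edge quantities P₁(n,m) := h(α,β)(u(n,m), u(n+1,m)) and P₂(n,m) := h(β,α)(u(n,m), u(n,m+1)). Then for all (n,m) ∈ ℤ² the multiplicative conservation law P₁(n,m)·P₁(n,m+1) = P₂(n,m)·P₂(n+1,m) holds; equivalently, the equation Q = 0 implies the conservation law (S_m − id)( (−1)^{n+m} log P₁ ) = (S_n − id)( (−1)^{n+m} log P₂ ) at the level of products. -/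
/-! Write `Q_x, Q_y, Q_z, Q_w` for the first derivatives of `Q(α,β)` at the corner values
`x, y, z, w` of an elementary square. Since `Q = 0` there, the biquadratic on the edge `xy` is
`h(α,β)(x,y) = -Q_z Q_w`. The D₄ symmetry sends this edge to each of the other three, and
multiplies `Q` by a sign which disappears from the quadratic expression `h`:
`h(α,β)(z,w) = -Q_x Q_y`, `h(β,α)(x,z) = -Q_y Q_w`, `h(β,α)(y,w) = -Q_x Q_z`.
Both sides of the conservation law therefore equal `Q_x Q_y Q_z Q_w`.
-/

noncomputable section

/-- conservation law: for a solution `u` of the lattice equation `Q = 0`,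
the edge quantities `P₁(n,m) = h(α,β)(u(n,m),u(n+1,m))` and
`P₂(n,m) = h(β,α)(u(n,m),u(n,m+1))` satisfy the multiplicative conservation law
`P₁(n,m)·P₁(n,m+1) = P₂(n,m)·P₂(n+1,m)`. -/
theorem statement7 (Q : ℂ → ℂ → ℂ → ℂ → ℂ → ℂ → ℂ)
    (hA : ∀ α β : ℂ, AffLin (Q α β)) (hD4 : D4Sym Q)
    (h : ℂ → ℂ → ℂ → ℂ → ℂ)
    (hh : ∀ α β x y z w : ℂ, hE (Q α β) x y z w = h α β x y)
    (α β : ℂ) (u : ℤ → ℤ → ℂ)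
    (hu : ∀ n m : ℤ, Q α β (u n m) (u (n+1) m) (u n (m+1)) (u (n+1) (m+1)) = 0)
    (P₁ P₂ : ℤ → ℤ → ℂ)
    (hP₁ : ∀ n m : ℤ, P₁ n m = h α β (u n m) (u (n+1) m))
    (hP₂ : ∀ n m : ℤ, P₂ n m = h β α (u n m) (u n (m+1))) :
    ∀ n m : ℤ, P₁ n m * P₁ n (m+1) = P₂ n m * P₂ (n+1) m := by
  obtain ⟨ε, σ, hε, hσ, hs⟩ := hD4
  have hε2 : ε * ε = 1 := by rcases hε with rfl | rfl <;> norm_num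
  have hσ2 : σ * σ = 1 := by rcases hσ with rfl | rfl <;> norm_num
  have rot : ∀ x y z w : ℂ, Q α β z w x y = σ * Q α β x y z w := by
    intro x y z w
    rw [(hs α β z w x y).1, (hs β α z x w y).2, (hs β α x z y w).1]
    linear_combination σ * Q α β x y z w * hε2
  have refl1 : ∀ x y z w : ℂ, Q β α x z y w = ε * Q α β x y z w :=
    fun x y z w => (hs β α x z y w).1
  have refl2 : ∀ x y z w : ℂ, Q β α y w x z = ε * σ * Q α β x y z w := by
    intro x y z w
    rw [(hs β α y w x z).1, (hs α β y x w z).2]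
    ring
  intro n m
  have h0 := hu n m
  rw [hP₁, hP₁, hP₂, hP₂]
  generalize u n m = x at *
  generalize u (n+1) m = y at *
  generalize u n (m+1) = z at *
  generalize u (n+1) (m+1) = w at *
  -- The arguments on which `h` does not depend are taken to be the opposite corners of the square.
  have a1 : h α β x y = -(pZ (Q α β) x y z w * pW (Q α β) x y z w) := by
    rw [← hh α β x y z w]
    simp [hE, h0]
  have a2 : h α β z w = -(pX (Q α β) x y z w * pY (Q α β) x y z w) := by
    rw [← hh α β z w x y, hE, rot x y z w, h0]
    simp only [pZ, pW, pX, pY, fun t => rot t y z w, fun t => rot x t z w,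
      deriv_const_mul_field]
    linear_combination
      -(deriv (fun t => Q α β t y z w) x * deriv (fun t => Q α β x t z w) y) * hσ2
  have a3 : h β α x z = -(pY (Q α β) x y z w * pW (Q α β) x y z w) := by
    rw [← hh β α x z y w, hE, refl1 x y z w, h0]
    simp only [pZ, pW, pY, fun t => refl1 x t z w, fun t => refl1 x y z t,
      deriv_const_mul_field]
    linear_combination
      -(deriv (fun t => Q α β x t z w) y * deriv (fun t => Q α β x y z t) w) * hε2
  have a4 : h β α y w = -(pX (Q α β) x y z w * pZ (Q α β) x y z w) := by
    rw [← hh β α y w x z, hE, refl2 x y z w, h0]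
    simp only [pZ, pW, pX, fun t => refl2 t y z w, fun t => refl2 x y t w,
      deriv_const_mul_field]
    linear_combination
      -(deriv (fun t => Q α β t y z w) x * deriv (fun t => Q α β x y t w) z) *
        (σ * σ * hε2 + hσ2)
  rw [a1, a2, a3, a4]
  ring
end
end

section
/- Let h : ℂ² → ℂ be a polynomial of degree at most two in each of its two arguments which is symmetric, h(x,y) = h(y,x). Then for all x, y, z ∈ ℂ the identity (y − z)·( (∂₂h)(x,y) + (∂₁h)(z,x) ) = 2·( h(x,y) − h(z,x) ) holds, where ∂₁h, ∂₂h denote the partial derivatives of h with respect to its first and second argument. -/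
/-! For fixed `x`, symmetry turns both `h x ·` and `h · x` into one and the same quadratic polynomial
`q t = a + b * t + d * t ^ 2`. The identity then says that the trapezoidal rule is exact on the
affine function `q'`, that is `(y - z) * (q' y + q' z) = 2 * (q y - q z)`, which is checked on
coefficients using `deriv_quadratic`. -/

noncomputable section

theorem deriv_quadratic (a b d s : ℂ) :
    deriv (fun t : ℂ => a + b * t + d * t ^ 2) s = b + 2 * d * s := by
  have hb : HasDerivAt (fun t : ℂ => a + b * t) (b * 1) s :=
    ((hasDerivAt_id s).const_mul b).const_add a
  have hd : HasDerivAt (fun t : ℂ => d * t ^ 2) (d * (((2 : ℕ) : ℂ) * s ^ (2 - 1))) s :=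
    (hasDerivAt_pow 2 s).const_mul d
  refine (hb.add hd).deriv.trans ?_
  push_cast
  ring

/-- for a symmetric biquadratic polynomial `h`, the identity
`(y − z)·(∂₂h(x,y) + ∂₁h(z,x)) = 2·(h(x,y) − h(z,x))` holds. -/
theorem statement8 (h : ℂ → ℂ → ℂ)
    (hpoly : ∃ c : Fin 3 → Fin 3 → ℂ, ∀ x y : ℂ,
      h x y = ∑ i : Fin 3, ∑ j : Fin 3, c i j * x ^ (i : ℕ) * y ^ (j : ℕ))
    (hsym : ∀ x y : ℂ, h x y = h y x) :
    ∀ x y z : ℂ,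
      (y - z) * (deriv (fun t => h x t) y + deriv (fun t => h t x) z) =
        2 * (h x y - h z x) := by
  obtain ⟨c, hc⟩ := hpoly
  intro x y z
  obtain ⟨a, b, d, hq⟩ : ∃ a b d : ℂ, ∀ t, h x t = a + b * t + d * t ^ 2 := by
    refine ⟨∑ i : Fin 3, c i 0 * x ^ (i : ℕ), ∑ i : Fin 3, c i 1 * x ^ (i : ℕ),
      ∑ i : Fin 3, c i 2 * x ^ (i : ℕ), fun t => ?_⟩
    rw [hc]
    simp only [Fin.sum_univ_three, Fin.val_zero, Fin.val_one, Fin.val_two]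
    ring
  -- By symmetry both partial derivatives are derivatives of the same quadratic `h x ·`.
  have hsymm : (fun t => h t x) = fun t => h x t := funext fun t => hsym t x
  rw [hsymm, hsym z x, funext hq, deriv_quadratic, deriv_quadratic]
  ring
end
end

section
/- Let Q(α,β) : ℂ⁴ → ℂ be a two-parameter family of affine linear D₄-symmetric functions (Q(α,β)(x,y,z,w) = ε·Q(β,α)(x,z,y,w) = σ·Q(α,β)(y,x,w,z) for signs ε,σ ∈ {1,−1}), with biquadratic h(α,β)(x,y) the common value of Q·Q_{zw} − Q_z·Q_w. Fix parameters α, β and let u : ℤ² → ℂ satisfy Q(α,β)(u(n,m), u(n+1,m), u(n,m+1), u(n+1,m+1)) = 0 for all (n,m) ∈ ℤ², and assume u(n+1,m) ≠ u(n−1,m) for all (n,m). Define the three-point characteristic R(n,m) := h(α,β)(u(n,m), u(n+1,m)) / (u(n+1,m) − u(n−1,m)) − (1/2)·(∂₂h(α,β))(u(n,m), u(n+1,m)). Then R satisfies the determining equation of a generalized symmetry: for every (n,m), Q_x·R(n,m) + Q_y·R(n+1,m) + Q_z·R(n,m+1) + Q_w·R(n+1,m+1) = 0, where the partial derivatives of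 Q(α,β) are evaluated at (u(n,m), u(n+1,m), u(n,m+1), u(n+1,m+1)). -/
/-!
Write `x, y, z, w` for the values of `u` on the square at `(n,m)` and take all derivatives of
`Q = Q(α,β)` there; `Q = 0`. The symmetries give `h(z,w) = Q Q_xy - Q_x Q_y` and
`h(x,y) = h(y,x)`, so on the solution `h(x,y) = -Q_z Q_w` and `h(z,w) = -Q_x Q_y`.

Let `a, b` be the values at `(n-1,m), (n-1,m+1)`. Reflecting the left-hand square,
`Q(x,a,z,b) = 0` as well as `Q(x,y,z,w) = 0`, and the (exact) second order Taylor expansion in the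
second and fourth slots gives `Q_w/(y-a) + Q_y/(w-b) = Q_yw`. Hence the quotient parts of
`Q_x R(n,m) + Q_z R(n,m+1)` add up to `-Q_x Q_z Q_yw`. For the other two terms, `h` is quadratic in
its second argument, so with `s = u(n+2,m)`
`h(y,s)/(s-x) - ∂₂h(y,s)/2 = h(y,x)/(s-x) + ∂₂h(y,x)/2`,
and the right-hand square yields in the same way the contribution `Q_y Q_w Q_xz`. The fourfold
sum is now an expression in derivatives of `Q` at one point; expanding `∂h` by the product
rule makes it cancel identically. No nondegeneracy of `Q` is needed: the only
quantities divided by are differences such as `y - a` and `s - x`, nonzero by assumption.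
-/

noncomputable section

/-! ### Partial derivatives of affine linear functions -/

lemma hasDerivAt_affine {f : ℂ → ℂ} (a b : ℂ) (hf : ∀ t, f t = a + b * t) (x : ℂ) :
    HasDerivAt f (f 1 - f 0) x := by
  have : f = fun t => a + b * t := funext hf
  subst this
  have h1 := ((hasDerivAt_id x).const_mul b).const_add a
  refine h1.congr_deriv ?_
  ring

section AffLin

variable {F : ℂ → ℂ → ℂ → ℂ → ℂ}

lemma AffLin.diffX (hF : AffLin F) (x y z w : ℂ) :
    HasDerivAt (fun t => F t y z w) (F 1 y z w - F 0 y z w) x := by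
  obtain ⟨c, hc⟩ := hF
  refine hasDerivAt_affine (F 0 y z w) (F 1 y z w - F 0 y z w) (fun t => ?_) x
  simp only [hc, Fin.sum_univ_two, Fin.val_zero, Fin.val_one, pow_zero, pow_one]
  ring

lemma AffLin.diffY (hF : AffLin F) (x y z w : ℂ) :
    HasDerivAt (fun t => F x t z w) (F x 1 z w - F x 0 z w) y := by
  obtain ⟨c, hc⟩ := hF
  refine hasDerivAt_affine (F x 0 z w) (F x 1 z w - F x 0 z w) (fun t => ?_) y
  simp only [hc, Fin.sum_univ_two, Fin.val_zero, Fin.val_one, pow_zero, pow_one]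
  ring

lemma AffLin.diffZ (hF : AffLin F) (x y z w : ℂ) :
    HasDerivAt (fun t => F x y t w) (F x y 1 w - F x y 0 w) z := by
  obtain ⟨c, hc⟩ := hF
  refine hasDerivAt_affine (F x y 0 w) (F x y 1 w - F x y 0 w) (fun t => ?_) z
  simp only [hc, Fin.sum_univ_two, Fin.val_zero, Fin.val_one, pow_zero, pow_one]
  ring

lemma AffLin.diffW (hF : AffLin F) (x y z w : ℂ) :
    HasDerivAt (fun t => F x y z t) (F x y z 1 - F x y z 0) w := by
  obtain ⟨c, hc⟩ := hF
  refine hasDerivAt_affine (F x y z 0) (F x y z 1 - F x y z 0) (fun t => ?_) w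
  simp only [hc, Fin.sum_univ_two, Fin.val_zero, Fin.val_one, pow_zero, pow_one]
  ring

lemma AffLin.pX_eq (hF : AffLin F) (x y z w : ℂ) : pX F x y z w = F 1 y z w - F 0 y z w :=
  (hF.diffX x y z w).deriv

lemma AffLin.pY_eq (hF : AffLin F) (x y z w : ℂ) : pY F x y z w = F x 1 z w - F x 0 z w :=
  (hF.diffY x y z w).deriv

lemma AffLin.pZ_eq (hF : AffLin F) (x y z w : ℂ) : pZ F x y z w = F x y 1 w - F x y 0 w :=
  (hF.diffZ x y z w).deriv

lemma AffLin.pW_eq (hF : AffLin F) (x y z w : ℂ) : pW F x y z w = F x y z 1 - F x y z 0 :=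
  (hF.diffW x y z w).deriv

lemma AffLin.hasX (hF : AffLin F) (x y z w : ℂ) :
    HasDerivAt (fun t => F t y z w) (pX F x y z w) x := by
  rw [hF.pX_eq]; exact hF.diffX x y z w

lemma AffLin.hasY (hF : AffLin F) (x y z w : ℂ) :
    HasDerivAt (fun t => F x t z w) (pY F x y z w) y := by
  rw [hF.pY_eq]; exact hF.diffY x y z w

lemma AffLin.hasZ (hF : AffLin F) (x y z w : ℂ) :
    HasDerivAt (fun t => F x y t w) (pZ F x y z w) z := by
  rw [hF.pZ_eq]; exact hF.diffZ x y z w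

lemma AffLin.hasW (hF : AffLin F) (x y z w : ℂ) :
    HasDerivAt (fun t => F x y z t) (pW F x y z w) w := by
  rw [hF.pW_eq]; exact hF.diffW x y z w

lemma AffLin.pX (hF : AffLin F) : AffLin (pX F) := by
  have h1 := hF.pX_eq
  obtain ⟨c, hc⟩ := hF
  refine ⟨fun i j k l => if i = 0 then c 1 j k l else 0, fun x y z w => ?_⟩
  rw [h1]
  simp [hc, Fin.sum_univ_two]

lemma AffLin.pY (hF : AffLin F) : AffLin (pY F) := by
  have h1 := hF.pY_eq
  obtain ⟨c, hc⟩ := hF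
  refine ⟨fun i j k l => if j = 0 then c i 1 k l else 0, fun x y z w => ?_⟩
  rw [h1]
  simp [hc, Fin.sum_univ_two]
  ring

lemma AffLin.pZ (hF : AffLin F) : AffLin (pZ F) := by
  have h1 := hF.pZ_eq
  obtain ⟨c, hc⟩ := hF
  refine ⟨fun i j k l => if k = 0 then c i j 1 l else 0, fun x y z w => ?_⟩
  rw [h1]
  simp [hc, Fin.sum_univ_two]
  ring

lemma AffLin.pW (hF : AffLin F) : AffLin (pW F) := by
  have h1 := hF.pW_eq
  obtain ⟨c, hc⟩ := hF
  refine ⟨fun i j k l => if l = 0 then c i j k 1 else 0, fun x y z w => ?_⟩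
  rw [h1]
  simp [hc, Fin.sum_univ_two]
  ring

/-- Exact Taylor expansion in the second and fourth slots. -/
lemma AffLin.taylor_yw (hF : AffLin F) (x y z w y' w' : ℂ) :
    F x y' z w' = F x y z w + (y' - y) * _root_.pY F x y z w + (w' - w) * _root_.pW F x y z w +
      (y' - y) * (w' - w) * pYW F x y z w := by
  have e : pYW F x y z w = _root_.pY (_root_.pW F) x y z w := rfl
  rw [e, hF.pW.pY_eq, hF.pW_eq, hF.pW_eq, hF.pW_eq, hF.pY_eq]
  obtain ⟨c, hc⟩ := hF
  simp only [hc, Fin.sum_univ_two, Fin.val_zero, Fin.val_one, pow_zero, pow_one]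
  ring

/-- Exact Taylor expansion in the first and third slots. -/
lemma AffLin.taylor_xz (hF : AffLin F) (x y z w x' z' : ℂ) :
    F x' y z' w = F x y z w + (x' - x) * _root_.pX F x y z w + (z' - z) * _root_.pZ F x y z w +
      (x' - x) * (z' - z) * pXZ F x y z w := by
  have e : pXZ F x y z w = _root_.pX (_root_.pZ F) x y z w := rfl
  rw [e, hF.pZ.pX_eq, hF.pZ_eq, hF.pZ_eq, hF.pZ_eq, hF.pX_eq]
  obtain ⟨c, hc⟩ := hF
  simp only [hc, Fin.sum_univ_two, Fin.val_zero, Fin.val_one, pow_zero, pow_one]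
  ring

/-! ### Derivatives of the discriminants along a zero of `F` -/

/-- `∂_y (F F_zw - F_z F_w)` where `F = 0`. -/
lemma AffLin.hE_derivY (hF : AffLin F) {x y z w : ℂ} (h0 : F x y z w = 0) :
    HasDerivAt (fun t => hE F x t z w)
      (_root_.pY F x y z w * pZW F x y z w - pYZ F x y z w * _root_.pW F x y z w
        - _root_.pZ F x y z w * pYW F x y z w) y := by
  have h1 := ((hF.hasY x y z w).mul (hF.pW.pZ.hasY x y z w)).sub
    ((hF.pZ.hasY x y z w).mul (hF.pW.hasY x y z w))
  refine HasDerivAt.congr_deriv h1 ?_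
  simp only [h0, pZW, pYZ, pYW, _root_.pY, _root_.pZ]
  ring

/-- `∂_x (F F_zw - F_z F_w)` where `F = 0`. -/
lemma AffLin.hE_derivX (hF : AffLin F) {x y z w : ℂ} (h0 : F x y z w = 0) :
    HasDerivAt (fun t => hE F t y z w)
      (_root_.pX F x y z w * pZW F x y z w - pXZ F x y z w * _root_.pW F x y z w
        - _root_.pZ F x y z w * pXW F x y z w) x := by
  have h1 := ((hF.hasX x y z w).mul (hF.pW.pZ.hasX x y z w)).sub
    ((hF.pZ.hasX x y z w).mul (hF.pW.hasX x y z w))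
  refine HasDerivAt.congr_deriv h1 ?_
  simp only [h0, pZW, pXZ, pXW, _root_.pX, _root_.pZ]
  ring

/-- `∂_w (F F_xy - F_x F_y)` where `F = 0`. -/
lemma AffLin.h2E_derivW (hF : AffLin F) {x y z w : ℂ} (h0 : F x y z w = 0) :
    HasDerivAt (fun t => h2E F x y z t)
      (_root_.pW F x y z w * pXY F x y z w - pXW F x y z w * _root_.pY F x y z w
        - _root_.pX F x y z w * pYW F x y z w) w := by
  have h1 := ((hF.hasW x y z w).mul (hF.pY.pX.hasW x y z w)).sub
    ((hF.pX.hasW x y z w).mul (hF.pY.hasW x y z w))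
  refine HasDerivAt.congr_deriv h1 ?_
  have e1 : pXW F x y z w = _root_.pW (_root_.pX F) x y z w := by
    change _root_.pX (_root_.pW F) x y z w = _
    simp only [hF.pW.pX_eq, hF.pX.pW_eq, hF.pX_eq, hF.pW_eq]
    ring
  have e2 : pYW F x y z w = _root_.pW (_root_.pY F) x y z w := by
    change _root_.pY (_root_.pW F) x y z w = _
    simp only [hF.pW.pY_eq, hF.pY.pW_eq, hF.pY_eq, hF.pW_eq]
    ring
  have e3 : pXY F x y z w = _root_.pX (_root_.pY F) x y z w := rfl
  rw [e1, e2, e3, h0]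
  ring

/-- `∂_z (F F_xy - F_x F_y)` where `F = 0`. -/
lemma AffLin.h2E_derivZ (hF : AffLin F) {x y z w : ℂ} (h0 : F x y z w = 0) :
    HasDerivAt (fun t => h2E F x y t w)
      (_root_.pZ F x y z w * pXY F x y z w - pXZ F x y z w * _root_.pY F x y z w
        - _root_.pX F x y z w * pYZ F x y z w) z := by
  have h1 := ((hF.hasZ x y z w).mul (hF.pY.pX.hasZ x y z w)).sub
    ((hF.pX.hasZ x y z w).mul (hF.pY.hasZ x y z w))
  refine HasDerivAt.congr_deriv h1 ?_
  have e1 : pXZ F x y z w = _root_.pZ (_root_.pX F) x y z w := by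
    change _root_.pX (_root_.pZ F) x y z w = _
    simp only [hF.pZ.pX_eq, hF.pX.pZ_eq, hF.pX_eq, hF.pZ_eq]
    ring
  have e2 : pYZ F x y z w = _root_.pZ (_root_.pY F) x y z w := by
    change _root_.pY (_root_.pZ F) x y z w = _
    simp only [hF.pZ.pY_eq, hF.pY.pZ_eq, hF.pY_eq, hF.pZ_eq]
    ring
  have e3 : pXY F x y z w = _root_.pX (_root_.pY F) x y z w := rfl
  rw [e1, e2, e3, h0]
  ring

/-! ### Consequences of the square symmetries -/

/-- Reflection in the first edge direction makes the discriminant symmetric. -/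
lemma AffLin.hE_swap (hF : AffLin F) {σ : ℂ} (hσ : σ * σ = 1)
    (hs : ∀ x y z w, F x y z w = σ * F y x w z) (x y z w : ℂ) :
    hE F y x w z = hE F x y z w := by
  have e : ∀ x y z w, pZW F x y z w = _root_.pZ (_root_.pW F) x y z w := fun _ _ _ _ => rfl
  simp only [hE, e, hF.pW.pZ_eq, hF.pZ_eq, hF.pW_eq]
  simp only [hs x y]
  linear_combination (-(F y x w z * ((F y x 1 1 - F y x 0 1) - (F y x 1 0 - F y x 0 0))
    - (F y x 1 z - F y x 0 z) * (F y x w 1 - F y x w 0))) * hσ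

/-- Reflection in the second edge direction exchanges the discriminants on opposite edges. -/
lemma AffLin.hE_flip (hF : AffLin F) {σ : ℂ} (hσ : σ * σ = 1)
    (hs : ∀ x y z w, F x y z w = σ * F z w x y) (x y z w : ℂ) :
    hE F z w x y = h2E F x y z w := by
  have e : ∀ x y z w, pZW F x y z w = _root_.pZ (_root_.pW F) x y z w := fun _ _ _ _ => rfl
  have e' : ∀ x y z w, pXY F x y z w = _root_.pX (_root_.pY F) x y z w := fun _ _ _ _ => rfl
  simp only [hE, h2E, e, e', hF.pW.pZ_eq, hF.pZ_eq, hF.pW_eq, hF.pY.pX_eq, hF.pX_eq, hF.pY_eq]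
  simp only [hs z w]
  linear_combination (F x y z w * ((F 1 1 z w - F 0 1 z w) - (F 1 0 z w - F 0 0 z w))
    - (F 1 y z w - F 0 y z w) * (F x 1 z w - F x 0 z w)) * hσ

/-- The discriminant is a polynomial of degree at most two in the second slot. -/
lemma AffLin.hE_quadratic (hF : AffLin F) (x z w : ℂ) :
    ∃ A B C : ℂ, ∀ t, hE F x t z w = A + B * t + C * t ^ 2 := by
  have key : ∀ G : ℂ → ℂ → ℂ → ℂ → ℂ, AffLin G → ∀ t,
      G x t z w = G x 0 z w + t * (G x 1 z w - G x 0 z w) := by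
    rintro G ⟨c, hc⟩ t
    simp only [hc, Fin.sum_univ_two, Fin.val_zero, Fin.val_one, pow_zero, pow_one]
    ring
  have k1 := key _ hF
  have k2 := key _ hF.pW.pZ
  have k3 := key _ hF.pZ
  have k4 := key _ hF.pW
  set a := F x 0 z w
  set b := _root_.pZ (_root_.pW F) x 0 z w
  set c := _root_.pZ F x 0 z w
  set d := _root_.pW F x 0 z w
  set a' := F x 1 z w - a
  set b' := _root_.pZ (_root_.pW F) x 1 z w - b
  set c' := _root_.pZ F x 1 z w - c
  set d' := _root_.pW F x 1 z w - d
  refine ⟨a * b - c * d, a * b' + a' * b - c * d' - c' * d, a' * b' - c' * d', fun t => ?_⟩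
  change F x t z w * _root_.pZ (_root_.pW F) x t z w
    - _root_.pZ F x t z w * _root_.pW F x t z w = _
  rw [k1, k2, k3, k4]
  ring

end AffLin

/-- For a quadratic `q`, the three-point characteristic may be based at either neighbour:
`q(s)/(s-x) - q'(s)/2 = q(x)/(s-x) + q'(x)/2`. -/
lemma quadratic_shift {q : ℂ → ℂ} {A B C : ℂ} (hq : ∀ t, q t = A + B * t + C * t ^ 2)
    {s x : ℂ} (hsx : s ≠ x) :
    q s / (s - x) - (1/2) * deriv q s = q x / (s - x) + (1/2) * deriv q x := by
  have hd : ∀ t, deriv q t = B + 2 * C * t := by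
    intro t
    have e : q = fun t => A + B * t + C * t ^ 2 := funext hq
    rw [e]
    have h1 := (((hasDerivAt_id t).const_mul B).const_add A).add
      (((hasDerivAt_id t).pow 2).const_mul C)
    refine (h1.congr_deriv ?_).deriv
    simp
    ring
  rw [hd, hd, hq, hq]
  have := sub_ne_zero.mpr hsx
  field_simp
  ring

/-- every affine linear D₄-symmetric lattice equation `Q = 0` admits the
three-point generalized symmetry with characteristic
`R = h(u₀₀,u₁₀)/(u₁₀ − u_{-1,0}) − (1/2)·∂₂h(u₀₀,u₁₀)`;
i.e. `R` satisfies the determining equation along every solution `u`. -/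
theorem statement9 (Q : ℂ → ℂ → ℂ → ℂ → ℂ → ℂ → ℂ)
    (hA : ∀ α β : ℂ, AffLin (Q α β)) (hD4 : D4Sym Q)
    (h : ℂ → ℂ → ℂ → ℂ → ℂ)
    (hh : ∀ α β x y z w : ℂ, hE (Q α β) x y z w = h α β x y)
    (α β : ℂ) (u : ℤ → ℤ → ℂ)
    (hu : ∀ n m : ℤ, Q α β (u n m) (u (n+1) m) (u n (m+1)) (u (n+1) (m+1)) = 0)
    (hne : ∀ n m : ℤ, u (n+1) m ≠ u (n-1) m)
    (R : ℤ → ℤ → ℂ)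
    (hR : ∀ n m : ℤ, R n m =
      h α β (u n m) (u (n+1) m) / (u (n+1) m - u (n-1) m) -
        (1/2) * deriv (fun t => h α β (u n m) t) (u (n+1) m)) :
    ∀ n m : ℤ,
      pX (Q α β) (u n m) (u (n+1) m) (u n (m+1)) (u (n+1) (m+1)) * R n m +
      pY (Q α β) (u n m) (u (n+1) m) (u n (m+1)) (u (n+1) (m+1)) * R (n+1) m +
      pZ (Q α β) (u n m) (u (n+1) m) (u n (m+1)) (u (n+1) (m+1)) * R n (m+1) +
      pW (Q α β) (u n m) (u (n+1) m) (u n (m+1)) (u (n+1) (m+1)) * R (n+1) (m+1) = 0 := by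
  obtain ⟨ε, σ, hε, hσ, hs⟩ := hD4
  have hε2 : ε * ε = 1 := by rcases hε with rfl | rfl <;> norm_num
  have hσ2 : σ * σ = 1 := by rcases hσ with rfl | rfl <;> norm_num
  have hswap : ∀ x y z w, Q α β x y z w = σ * Q α β y x w z := fun x y z w => (hs α β x y z w).2
  -- The remaining reflection is the conjugate of the previous one by the diagonal reflection.
  have hflip : ∀ x y z w, Q α β x y z w = σ * Q α β z w x y := fun x y z w => by
    rw [(hs α β x y z w).1, (hs β α x z y w).2, (hs β α z x w y).1]
    linear_combination σ * Q α β z w x y * hε2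
  have hF := hA α β
  have hsymm : ∀ x y, h α β y x = h α β x y := fun x y => by
    rw [← hh α β y x 0 0, ← hh α β x y 0 0]
    exact hF.hE_swap hσ2 hswap x y 0 0
  have hopp : ∀ x y z w, h α β z w = h2E (Q α β) x y z w := fun x y z w => by
    rw [← hh α β z w x y]
    exact hF.hE_flip hσ2 hflip x y z w
  have hshift : ∀ y s x, s ≠ x →
      h α β y s / (s - x) - (1/2) * deriv (fun t => h α β y t) s =
        h α β y x / (s - x) + (1/2) * deriv (fun t => h α β y t) x := fun y s x hsx => by
    obtain ⟨A, B, C, hq⟩ := hF.hE_quadratic y 0 0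
    refine quadratic_shift (q := fun t => h α β y t) (A := A) (B := B) (C := C) (fun t => ?_) hsx
    rw [← hq t, hh]
  intro n m
  have q0 := hu n m
  have qL := hu (n - 1) m
  have qR := hu (n + 1) m
  have d1 := hne n m
  have d2 := hne n (m + 1)
  have d3 := hne (n + 1) m
  have d4 := hne (n + 1) (m + 1)
  rw [hR n m, hR n (m+1), hR (n+1) m, hR (n+1) (m+1)]
  simp only [sub_add_cancel, add_sub_cancel_right] at qL d1 d2 d3 d4 ⊢
  rw [hshift _ _ _ d3, hshift _ _ _ d4]
  generalize u n m = x at *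
  generalize u (n+1) m = y at *
  generalize u n (m+1) = z at *
  generalize u (n+1) (m+1) = w at *
  generalize u (n-1) m = a at *
  generalize u (n-1) (m+1) = b at *
  generalize u (n+1+1) m = s at *
  generalize u (n+1+1) (m+1) = t at *
  have D1 := (hF.hE_derivY q0).deriv
  rw [← show (fun t => h α β x t) = fun t => hE (Q α β) x t z w from
    funext fun t => (hh α β x t z w).symm] at D1
  have D2 := (hF.h2E_derivW q0).deriv
  rw [← show (fun t => h α β z t) = fun t => h2E (Q α β) x y z t from
    funext fun t => hopp x y z t] at D2
  have D3 := (hF.hE_derivX q0).deriv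
  rw [← show (fun t => h α β y t) = fun t => hE (Q α β) t y z w from
    funext fun t => (hsymm t y).trans (hh α β t y z w).symm] at D3
  have D4 := (hF.h2E_derivZ q0).deriv
  rw [← show (fun t => h α β w t) = fun t => h2E (Q α β) x y t w from
    funext fun t => (hsymm t w).trans (hopp x y t w)] at D4
  have H1 : h α β x y = - (pZ (Q α β) x y z w * pW (Q α β) x y z w) := by
    rw [← hh α β x y z w, hE, q0]; ring
  have H2 : h α β z w = - (pX (Q α β) x y z w * pY (Q α β) x y z w) := by
    rw [hopp x y, h2E, q0]; ring
  have TL := hF.taylor_yw x y z w a b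
  have TR := hF.taylor_xz x y z w s t
  have qL' : Q α β x a z b = 0 := by rw [hswap, qL, mul_zero]
  have qR' : Q α β s y t w = 0 := by rw [hswap, qR, mul_zero]
  rw [qL', q0] at TL
  rw [qR', q0] at TR
  rw [D1, D2, D3, D4, hsymm x y, hsymm z w, H1, H2]
  have n1 := sub_ne_zero.mpr d1
  have n2 := sub_ne_zero.mpr d2
  have n3 := sub_ne_zero.mpr d3
  have n4 := sub_ne_zero.mpr d4
  generalize pX (Q α β) x y z w = X at *
  generalize pY (Q α β) x y z w = Y at *
  generalize pZ (Q α β) x y z w = Z at *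
  generalize pW (Q α β) x y z w = W at *
  have EL : W / (y - a) + Y / (w - b) = pYW (Q α β) x y z w := by
    field_simp
    linear_combination TL
  have ER : Z / (s - x) + X / (t - z) = - pXZ (Q α β) x y z w := by
    field_simp
    linear_combination -TR
  linear_combination (-X * Z) * EL - Y * W * ER
end
end

section
/- Let α, β ∈ ℂ and let u : ℤ² → ℂ solve the lattice potential KdV equation H1: (u(n,m) − u(n+1,m+1))·(u(n+1,m) − u(n,m+1)) = α − β for all (n,m) ∈ ℤ², with u(n+1,m) ≠ u(n−1,m) for all (n,m). Define R(n,m) := 1/(u(n+1,m) − u(n−1,m)). Then for every (n,m): (u(n+1,m) − u(n,m+1))·(R(n,m) − R(n+1,m+1)) + (u(n,m) − u(n+1,m+1))·(R(n+1,m) − R(n,m+1)) = 0, i.e. R is the characteristic of a three-point generalized symmetry of H1. -/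
/-! Write `X = u(n,m) − u(n+1,m+1)` and `Y = u(n+1,m) − u(n,m+1)`. Comparing H1 on the central
quadrilateral with H1 on its left neighbour gives `Y R(n,m) − X R(n,m+1) = 1`, and comparing it with
H1 on its right neighbour gives `Y R(n+1,m+1) − X R(n+1,m) = 1`. The difference of these two
identities is the determining equation. -/

/-- Both neighbour comparisons have this form: `X` and `Y` are the diagonals of the central
quadrilateral, and those of its neighbour are `X + B` and `Y - A`. -/
lemma diagonal_shift {X Y A B : ℂ} (hA : A ≠ 0) (hB : B ≠ 0)
    (h : (Y - A) * (X + B) = X * Y) : Y * (1 / A) - X * (1 / B) = 1 := by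
  field_simp
  linear_combination h

/-- `R(n,m) = 1/(u(n+1,m) − u(n−1,m))` is the characteristic of a
three-point generalized symmetry of the lattice potential KdV equation H1. -/
theorem statement10 (α β : ℂ) (u : ℤ → ℤ → ℂ)
    (hu : ∀ n m : ℤ, (u n m - u (n+1) (m+1)) * (u (n+1) m - u n (m+1)) = α - β)
    (hne : ∀ n m : ℤ, u (n+1) m ≠ u (n-1) m)
    (R : ℤ → ℤ → ℂ)
    (hR : ∀ n m : ℤ, R n m = 1 / (u (n+1) m - u (n-1) m)) :
    ∀ n m : ℤ,
      (u (n+1) m - u n (m+1)) * (R n m - R (n+1) (m+1)) +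
      (u n m - u (n+1) (m+1)) * (R (n+1) m - R n (m+1)) = 0 := by
  intro n m
  have hleft := hu (n-1) m
  rw [sub_add_cancel] at hleft
  have hmid := hu n m
  have hright := hu (n+1) m
  have h₁ : (u (n+1) m - u n (m+1)) * R n m - (u n m - u (n+1) (m+1)) * R n (m+1) = 1 := by
    rw [hR, hR]
    refine diagonal_shift (sub_ne_zero.2 (hne n m)) (sub_ne_zero.2 (hne n (m+1))) ?_
    linear_combination hleft - hmid
  have h₂ : (u (n+1) m - u n (m+1)) * R (n+1) (m+1)
      - (u n m - u (n+1) (m+1)) * R (n+1) m = 1 := by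
    have hp := hne (n+1) m
    have hq := hne (n+1) (m+1)
    rw [hR, hR]
    rw [add_sub_cancel_right] at hp hq ⊢
    refine diagonal_shift (sub_ne_zero.2 hq) (sub_ne_zero.2 hp) ?_
    linear_combination hright - hmid
  linear_combination h₁ - h₂
end

section
/- Let α, β ∈ ℂ with α ≠ β and let u : ℤ² → ℂ solve the lattice potential KdV equation H1: (u(n,m) − u(n+1,m+1))·(u(n+1,m) − u(n,m+1)) = α − β for all (n,m) ∈ ℤ², with u(n+1,m) ≠ u(n−1,m) for all (n,m). Define R(n,m) := n/(u(n+1,m) − u(n−1,m)) + u(n,m)/(2(α − β)). Then for every (n,m): (u(n+1,m) − u(n,m+1))·(R(n,m) − R(n+1,m+1)) + (u(n,m) − u(n+1,m+1))·(R(n+1,m) − R(n,m+1)) = 0, i.e. R is the characteristic of the three-point generalized symmetry v₂ = n·v₁ + u/(2(α−β))·∂_u of H1. -/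
/-!
Put `k = α - β`, `A = u(n+1,m) - u(n,m+1)` and `B = u(n,m) - u(n+1,m+1)`, so `A * B = k`.
The left-hand side of the determining equation splits into three parts. The term `u/(2k)` of `R`
contributes `2AB/(2k) = 1`. The values of `R` at `(n,m)` and `(n,m+1)` contribute `n` times
`A/(u(n+1,m) - u(n-1,m)) - B/(u(n+1,m+1) - u(n-1,m+1))`, and those at `(n+1,m+1)` and `(n+1,m)`
contribute `-(n+1)` times the analogous bracket for the points `n`, `n+2`. Each bracket equals `1`
by H1 on the neighbouring quadrilateral (`div_sub_div_eq_one`), and `n - (n+1) + 1 = 0`.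
-/

/-- The identity linking two adjacent quadrilaterals: `A, B` are the diagonal differences of one
and `P, T` those of the other, with equal products by H1. -/
lemma div_sub_div_eq_one {A B P T : ℂ} (h : A * B = P * T) (hAP : A - P ≠ 0)
    (hTB : T - B ≠ 0) : A / (A - P) - B / (T - B) = 1 := by
  rw [div_sub_div _ _ hAP hTB, div_eq_one_iff_eq (mul_ne_zero hAP hTB)]
  linear_combination -h

/-- `R(n,m) = n/(u(n+1,m) − u(n−1,m)) + u(n,m)/(2(α−β))` is the
characteristic of the three-point generalized symmetry `v₂` of H1. -/
theorem statement11 (α β : ℂ) (hαβ : α ≠ β) (u : ℤ → ℤ → ℂ)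
    (hu : ∀ n m : ℤ, (u n m - u (n+1) (m+1)) * (u (n+1) m - u n (m+1)) = α - β)
    (hne : ∀ n m : ℤ, u (n+1) m ≠ u (n-1) m)
    (R : ℤ → ℤ → ℂ)
    (hR : ∀ n m : ℤ, R n m =
      (n : ℂ) / (u (n+1) m - u (n-1) m) + u n m / (2 * (α - β))) :
    ∀ n m : ℤ,
      (u (n+1) m - u n (m+1)) * (R n m - R (n+1) (m+1)) +
      (u n m - u (n+1) (m+1)) * (R (n+1) m - R n (m+1)) = 0 := by
  intro n m
  have hk : α - β ≠ 0 := sub_ne_zero.mpr hαβ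
  have h0 := hu n m
  have hl := hu (n-1) m
  have hr := hu (n+1) m
  have d1 := sub_ne_zero.mpr (hne n m)
  have d2 := sub_ne_zero.mpr (hne n (m+1))
  have d3 := sub_ne_zero.mpr (hne (n+1) m)
  have d4 := sub_ne_zero.mpr (hne (n+1) (m+1))
  simp only [sub_add_cancel, add_sub_cancel_right] at hl d3 d4
  rw [hR n m, hR (n+1) (m+1), hR (n+1) m, hR n (m+1)]
  simp only [add_sub_cancel_right]
  push_cast
  -- Bracket from the quadrilateral on the left.
  have e1 : (u (n+1) m - u n (m+1)) / (u (n+1) m - u (n-1) m)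
      - (u n m - u (n+1) (m+1)) / (u (n+1) (m+1) - u (n-1) (m+1)) = 1 := by
    have := div_sub_div_eq_one (A := u (n+1) m - u n (m+1)) (B := u n m - u (n+1) (m+1))
      (P := u (n-1) m - u n (m+1)) (T := u n m - u (n-1) (m+1))
      (by linear_combination h0 - hl) (by convert d1 using 1; ring)
      (by convert d2 using 1; ring)
    convert this using 3 <;> ring
  -- Bracket from the quadrilateral on the right.
  have e2 : (u (n+1) m - u n (m+1)) / (u (n+1+1) (m+1) - u n (m+1))
      - (u n m - u (n+1) (m+1)) / (u (n+1+1) m - u n m) = 1 := by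
    have := div_sub_div_eq_one (A := u (n+1) m - u n (m+1)) (B := u n m - u (n+1) (m+1))
      (P := u (n+1) m - u (n+1+1) (m+1)) (T := u (n+1+1) m - u (n+1) (m+1))
      (by linear_combination h0 - hr) (by convert d4 using 1; ring)
      (by convert d3 using 1; ring)
    convert this using 3 <;> ring
  have e3 : (u n m - u (n+1) (m+1)) * (u (n+1) m - u n (m+1)) / (α - β) = 1 := by
    rw [h0, div_self hk]
  rw [mul_comm 2 (α - β), ← div_div, ← div_div, ← div_div, ← div_div]
  linear_combination (n : ℂ) * e1 - ((n : ℂ) + 1) * e2 + e3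
end

section
/- Let α, β ∈ ℂ and let u : ℤ² → ℂ solve the H2 equation: (u(n,m) − u(n+1,m+1))·(u(n+1,m) − u(n,m+1)) + (β − α)·(u(n,m) + u(n+1,m) + u(n,m+1) + u(n+1,m+1)) − α² + β² = 0 for all (n,m) ∈ ℤ², with u(n+1,m) ≠ u(n−1,m) for all (n,m). Define R(n,m) := (u(n+1,m) + 2·u(n,m) + u(n−1,m) + 2α)/(u(n+1,m) − u(n−1,m)). Then for every (n,m) the determining equation Q_x·R(n,m) + Q_y·R(n+1,m) + Q_z·R(n,m+1) + Q_w·R(n+1,m+1) = 0 holds, where Q(x,y,z,w) = (x−w)(y−z) + (β−α)(x+y+z+w) − α² + β² and its partial derivatives are evaluated at (u(n,m), u(n+1,m), u(n,m+1), u(n+1,m+1)). That is, R is the characteristic of the three-point generalized symmetry v₁ of H2. -/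
/-!
The four terms of the determining equation on a cell split into its two vertical edges. On the
edge `(x, z)`, the terms `Q_x R(n, m) + Q_z R(n, m+1)` involve the left neighbours `a`, `a'` only
through `R`, and the H2 equations on the two cells adjacent to this edge make the sum collapse to
`x + y + z + w + 2α`, where `(x, y, z, w)` is the cell (`edge_sum`). The H2 polynomial is invariant
under the reflection `x ↔ y`, `z ↔ w`, whereas `R` changes sign, so the edge `(y, w)` contributes
`-(x + y + z + w + 2α)` and the two contributions cancel. The edge identity lies in the ideal
generated by the two cell equations, so no case distinction on degenerate values is needed.
-/

noncomputable section

/-- The H2 equation polynomial. -/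
def QH2 (α β : ℂ) : ℂ → ℂ → ℂ → ℂ → ℂ := fun x y z w =>
  (x - w) * (y - z) + (β - α) * (x + y + z + w) - α ^ 2 + β ^ 2

/-- The contribution of the vertical edge `(x, z)` shared by the cells `(x, y, z, w)` and
`(a, x, a', z)`: it does not depend on the values `a`, `a'` on the far side of the second cell. -/
lemma edge_sum {α β x y z w a a' : ℂ}
    (h : QH2 α β x y z w = 0) (h' : QH2 α β x a z a' = 0) (hya : y ≠ a) (hwa : w ≠ a') :
    (y - z + (β - α)) * ((y + 2 * x + a + 2 * α) / (y - a)) +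
      (w - x + (β - α)) * ((w + 2 * z + a' + 2 * α) / (w - a')) = x + y + z + w + 2 * α := by
  have h1 : y - a ≠ 0 := sub_ne_zero.mpr hya
  have h2 : w - a' ≠ 0 := sub_ne_zero.mpr hwa
  unfold QH2 at h h'
  field_simp
  linear_combination (-2 * (a + a' + β)) * h + (2 * (y + w + β)) * h'

lemma QH2_reflect (α β x y z w : ℂ) : QH2 α β y x w z = QH2 α β x y z w := by
  unfold QH2; ring

lemma pX_QH2 (α β x y z w : ℂ) : pX (QH2 α β) x y z w = y - z + (β - α) := by
  have h : (fun t => QH2 α β t y z w) = fun t => (y - z + (β - α)) * t + QH2 α β 0 y z w := by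
    funext t; unfold QH2; ring
  rw [pX, h]; simp

lemma pY_QH2 (α β x y z w : ℂ) : pY (QH2 α β) x y z w = x - w + (β - α) := by
  have h : (fun t => QH2 α β x t z w) = fun t => (x - w + (β - α)) * t + QH2 α β x 0 z w := by
    funext t; unfold QH2; ring
  rw [pY, h]; simp

lemma pZ_QH2 (α β x y z w : ℂ) : pZ (QH2 α β) x y z w = w - x + (β - α) := by
  have h : (fun t => QH2 α β x y t w) = fun t => (w - x + (β - α)) * t + QH2 α β x y 0 w := by
    funext t; unfold QH2; ring
  rw [pZ, h]; simp

lemma pW_QH2 (α β x y z w : ℂ) : pW (QH2 α β) x y z w = z - y + (β - α) := by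
  have h : (fun t => QH2 α β x y z t) = fun t => (z - y + (β - α)) * t + QH2 α β x y z 0 := by
    funext t; unfold QH2; ring
  rw [pW, h]; simp

/-- the characteristic `v₁` of a three-point generalized symmetry of H2. -/
theorem statement13 (α β : ℂ) (u : ℤ → ℤ → ℂ)
    (hu : ∀ n m : ℤ, QH2 α β (u n m) (u (n+1) m) (u n (m+1)) (u (n+1) (m+1)) = 0)
    (hne : ∀ n m : ℤ, u (n+1) m ≠ u (n-1) m)
    (R : ℤ → ℤ → ℂ)
    (hR : ∀ n m : ℤ, R n m =
      (u (n+1) m + 2 * u n m + u (n-1) m + 2 * α) / (u (n+1) m - u (n-1) m)) :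
    ∀ n m : ℤ,
      pX (QH2 α β) (u n m) (u (n+1) m) (u n (m+1)) (u (n+1) (m+1)) * R n m +
      pY (QH2 α β) (u n m) (u (n+1) m) (u n (m+1)) (u (n+1) (m+1)) * R (n+1) m +
      pZ (QH2 α β) (u n m) (u (n+1) m) (u n (m+1)) (u (n+1) (m+1)) * R n (m+1) +
      pW (QH2 α β) (u n m) (u (n+1) m) (u n (m+1)) (u (n+1) (m+1)) * R (n+1) (m+1) = 0 := by
  intro n m
  have left := hu (n - 1) m
  have right := hu (n + 1) m
  rw [sub_add_cancel, ← QH2_reflect] at left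
  have ne1 := hne (n + 1) m
  have ne1' := hne (n + 1) (m + 1)
  rw [add_sub_cancel_right] at ne1 ne1'
  have E := edge_sum (hu n m) left (hne n m) (hne n (m + 1))
  -- The reflected cell: the edge `(y, w)` with far neighbours `u (n+2) m`, `u (n+2) (m+1)`.
  have E' := edge_sum ((QH2_reflect ..).trans (hu n m)) right ne1.symm ne1'.symm
  rw [pX_QH2, pY_QH2, pZ_QH2, pW_QH2, hR n m, hR n (m + 1), hR (n + 1) m, hR (n + 1) (m + 1)]
  simp only [add_sub_cancel_right]
  rw [← neg_sub (u (n + 1 + 1) m), ← neg_sub (u (n + 1 + 1) (m + 1)), div_neg, div_neg] at E'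
  linear_combination E - E'
end
end

section
/- Let α, β, δ ∈ ℂ and let u : ℤ² → ℂ solve the H3 equation: α·(u(n,m)·u(n+1,m) + u(n,m+1)·u(n+1,m+1)) − β·(u(n,m)·u(n,m+1) + u(n+1,m)·u(n+1,m+1)) + δ·(α² − β²) = 0 for all (n,m) ∈ ℤ², with u(n+1,m) ≠ u(n−1,m) for all (n,m). Define R(n,m) := (u(n,m)·(u(n+1,m) + u(n−1,m)) + 2αδ)/(u(n+1,m) − u(n−1,m)). Then for every (n,m) the determining equation Q_x·R(n,m) + Q_y·R(n+1,m) + Q_z·R(n,m+1) + Q_w·R(n+1,m+1) = 0 holds, where Q(x,y,z,w) = α(xy + zw) − β(xz + yw) + δ(α² − β²) and its partial derivatives are evaluated at (u(n,m), u(n+1,m), u(n,m+1), u(n+1,m+1)). That is, R is the characteristic of the three-point generalized symmetry v₁ of H3. -/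
/-!
Write `x, y, z, w` for the values of `u` on an elementary square, `a, c` for the values to the left
of `x, z`, and `b, d` for those to the right of `y, w`. The two terms of the determining equation
that involve `a, c` add up to a polynomial in `x, y, z, w` alone (`left_sum`). The square to the
right is the mirror image of the square to the left under `x ↔ y`, `z ↔ w`, which changes the sign
of `R`, so the same lemma evaluates the other two terms, and the two polynomials cancel.

The evaluation rests on the factorizations, valid on `Q = 0` with `k = α² - β²`,
`Q_z Q_w = -k (x y + α δ)`, `Q_x Q_y = -k (z w + α δ)`, `Q_x Q_z = k (y w + β δ)`,
together with the difference of the equations on the two squares,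
`Q_y (y - a) + Q_w (w - c) + β (y - a) (w - c) = 0`. They determine the sum after multiplication
by `k`. When `k = 0` the polynomial `Q` splits into two factors and the values of `a` or `c` are
known explicitly.
-/

noncomputable section

/-- The H3 equation polynomial. -/
def QH3 (α β δ : ℂ) : ℂ → ℂ → ℂ → ℂ → ℂ := fun x y z w =>
  α * (x * y + z * w) - β * (x * z + y * w) + δ * (α ^ 2 - β ^ 2)

/-- The identity of `left_sum` with denominators cleared. -/
lemma left_sum_cleared (α β δ x y z w a c : ℂ)
    (h0 : QH3 α β δ x y z w = 0) (h1 : QH3 α β δ a x c z = 0)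
    (hy : y ≠ a) (hw : w ≠ c) :
    (α * y - β * z) * (x * (y + a) + 2 * α * δ) * (w - c) +
      (α * w - β * x) * (z * (w + c) + 2 * α * δ) * (y - a) =
    (2 * β * (y * w + β * δ) - α * (x * y + z * w) + 2 * β * (x * z)) * ((y - a) * (w - c)) := by
  simp only [QH3] at h0 h1
  by_cases hk : α ^ 2 - β ^ 2 = 0
  · by_cases hα : α = 0
    · have hβ : β = 0 := by simpa [hα] using hk
      simp [hα, hβ]
    rcases sq_eq_sq_iff_eq_or_eq_neg.mp (sub_eq_zero.mp hk).symm with rfl | rfl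
    · -- here `Q x y z w = β (x - w) (y - z)`
      have e0 : (x - w) * (y - z) = 0 := mul_left_cancel₀ hα (by linear_combination h0)
      have e1 : (a - z) * (x - c) = 0 := mul_left_cancel₀ hα (by linear_combination h1)
      rcases mul_eq_zero.mp e0 with e | e <;> rcases mul_eq_zero.mp e1 with f | f
      · obtain rfl := sub_eq_zero.mp e
        obtain rfl := sub_eq_zero.mp f
        ring
      · exact absurd (by linear_combination f - e) hw
      · exact absurd (by linear_combination e - f) hy
      · obtain rfl := sub_eq_zero.mp e
        obtain rfl := sub_eq_zero.mp f
        ring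
    · -- here `Q x y z w = α (x + w) (y + z)`
      have e0 : (x + w) * (y + z) = 0 := mul_left_cancel₀ hα (by linear_combination h0)
      have e1 : (a + z) * (x + c) = 0 := mul_left_cancel₀ hα (by linear_combination h1)
      rcases mul_eq_zero.mp e0 with e | e <;> rcases mul_eq_zero.mp e1 with f | f
      · obtain rfl := eq_neg_of_add_eq_zero_left e
        obtain rfl := eq_neg_of_add_eq_zero_left f
        ring
      · exact absurd (by linear_combination e - f) hw
      · exact absurd (by linear_combination e - f) hy
      · obtain rfl := eq_neg_of_add_eq_zero_left e
        obtain rfl := eq_neg_of_add_eq_zero_left f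
        ring
  · apply mul_left_cancel₀ hk
    linear_combination
      (2 * α * ((α * y - β * z) * (w - c) + (α * w - β * x) * (y - a))
        - 2 * (α * y - β * z) * (α * w - β * x) - 2 * β ^ 2 * ((y - a) * (w - c))) * h0
      + 2 * (α * y - β * z) * (α * w - β * x) * h1

/-- The terms `Q_x R(n,m) + Q_z R(n,m+1)` do not depend on the values `a, c` of the solution on the
neighbouring square. -/
lemma left_sum (α β δ x y z w a c : ℂ)
    (h0 : QH3 α β δ x y z w = 0) (h1 : QH3 α β δ a x c z = 0)
    (hy : y ≠ a) (hw : w ≠ c) :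
    (α * y - β * z) * ((x * (y + a) + 2 * α * δ) / (y - a)) +
      (α * w - β * x) * ((z * (w + c) + 2 * α * δ) / (w - c)) =
    2 * β * (y * w + β * δ) - α * (x * y + z * w) + 2 * β * (x * z) := by
  have hp := sub_ne_zero.mpr hy
  have hq := sub_ne_zero.mpr hw
  rw [← mul_div_assoc, ← mul_div_assoc, div_add_div _ _ hp hq, div_eq_iff (mul_ne_zero hp hq),
    ← left_sum_cleared α β δ x y z w a c h0 h1 hy hw]
  ring

lemma deriv_affine (A B t : ℂ) : deriv (fun s : ℂ => A * s + B) t = A := by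
  simp

lemma pX_QH3 (α β δ x y z w : ℂ) : pX (QH3 α β δ) x y z w = α * y - β * z := by
  rw [pX, ← deriv_affine (α * y - β * z) (α * (z * w) - β * (y * w) + δ * (α ^ 2 - β ^ 2)) x]
  congr 1; funext t; simp only [QH3]; ring

lemma pY_QH3 (α β δ x y z w : ℂ) : pY (QH3 α β δ) x y z w = α * x - β * w := by
  rw [pY, ← deriv_affine (α * x - β * w) (α * (z * w) - β * (x * z) + δ * (α ^ 2 - β ^ 2)) y]
  congr 1; funext t; simp only [QH3]; ring

lemma pZ_QH3 (α β δ x y z w : ℂ) : pZ (QH3 α β δ) x y z w = α * w - β * x := by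
  rw [pZ, ← deriv_affine (α * w - β * x) (α * (x * y) - β * (y * w) + δ * (α ^ 2 - β ^ 2)) z]
  congr 1; funext t; simp only [QH3]; ring

lemma pW_QH3 (α β δ x y z w : ℂ) : pW (QH3 α β δ) x y z w = α * z - β * y := by
  rw [pW, ← deriv_affine (α * z - β * y) (α * (x * y) - β * (x * z) + δ * (α ^ 2 - β ^ 2)) w]
  congr 1; funext t; simp only [QH3]; ring

/-- the characteristic `v₁` of a three-point generalized symmetry of H3. -/
theorem statement14 (α β δ : ℂ) (u : ℤ → ℤ → ℂ)
    (hu : ∀ n m : ℤ, QH3 α β δ (u n m) (u (n+1) m) (u n (m+1)) (u (n+1) (m+1)) = 0)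
    (hne : ∀ n m : ℤ, u (n+1) m ≠ u (n-1) m)
    (R : ℤ → ℤ → ℂ)
    (hR : ∀ n m : ℤ, R n m =
      (u n m * (u (n+1) m + u (n-1) m) + 2 * α * δ) / (u (n+1) m - u (n-1) m)) :
    ∀ n m : ℤ,
      pX (QH3 α β δ) (u n m) (u (n+1) m) (u n (m+1)) (u (n+1) (m+1)) * R n m +
      pY (QH3 α β δ) (u n m) (u (n+1) m) (u n (m+1)) (u (n+1) (m+1)) * R (n+1) m +
      pZ (QH3 α β δ) (u n m) (u (n+1) m) (u n (m+1)) (u (n+1) (m+1)) * R n (m+1) +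
      pW (QH3 α β δ) (u n m) (u (n+1) m) (u n (m+1)) (u (n+1) (m+1)) * R (n+1) (m+1) = 0 := by
  intro n m
  have h0 := hu n m
  have hl := hu (n - 1) m
  have hr := hu (n + 1) m
  have ha := hne n m
  have hc := hne n (m + 1)
  have hb := hne (n + 1) m
  have hd := hne (n + 1) (m + 1)
  rw [pX_QH3, pY_QH3, pZ_QH3, pW_QH3, hR n m, hR (n + 1) m, hR n (m + 1), hR (n + 1) (m + 1)]
  simp only [sub_add_cancel, add_sub_cancel_right] at hl hb hd ⊢
  generalize u n m = x at *
  generalize u (n + 1) m = y at *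
  generalize u n (m + 1) = z at *
  generalize u (n + 1) (m + 1) = w at *
  generalize u (n - 1) m = a at *
  generalize u (n - 1) (m + 1) = c at *
  generalize u (n + 1 + 1) m = b at *
  generalize u (n + 1 + 1) (m + 1) = d at *
  have L := left_sum α β δ x y z w a c h0 hl ha hc
  -- the mirrored square, with `x ↔ y`, `z ↔ w`
  have M := left_sum α β δ y x w z b d
    (by simp only [QH3] at h0 ⊢; linear_combination h0)
    (by simp only [QH3] at hr ⊢; linear_combination hr) hb.symm hd.symm
  -- the mirrored quotients are the values of `-R`
  have s1 : (y * (x + b) + 2 * α * δ) / (x - b) = -((y * (b + x) + 2 * α * δ) / (b - x)) := by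
    rw [← div_neg, neg_sub, add_comm x b]
  have s2 : (w * (z + d) + 2 * α * δ) / (z - d) = -((w * (d + z) + 2 * α * δ) / (d - z)) := by
    rw [← div_neg, neg_sub, add_comm z d]
  rw [s1, s2] at M
  linear_combination L - M
end
end

section
/- Let α, β, δ ∈ ℂ with δ ≠ 0 and let u : ℤ² → ℂ solve the H3 equation: α·(u(n,m)·u(n+1,m) + u(n,m+1)·u(n+1,m+1)) − β·(u(n,m)·u(n,m+1) + u(n+1,m)·u(n+1,m+1)) + δ·(α² − β²) = 0 for all (n,m), with u(n+1,m) ≠ u(n−1,m) and u(n,m+1) ≠ u(n,m−1) for all (n,m). Define R(n,m) := n·(u(n,m)·(u(n+1,m) + u(n−1,m)) + 2αδ)/(u(n+1,m) − u(n−1,m)) + m·(u(n,m)·(u(n,m+1) + u(n,m−1)) + 2βδ)/(u(n,m+1) − u(n,m−1)) − u(n,m)/2. Then for every (n,m) the determining equation Q_x·R(n,m) + Q_y·R(n+1,m) + Q_z·R(n,m+1) + Q_w·R(n+1,m+1) = 0 holds, where Q(x,y,z,w) = α(xy + zw) − β(xz + yw) + δ(α² − β²) and its partial derivatives are evaluated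 at (u(n,m), u(n+1,m), u(n,m+1), u(n+1,m+1)). That is, R is the characteristic of the five-point generalized symmetry w = n·v₁ + m·v₂ − (u/2)∂_u of H3. -/
/-!
Write `x, y, z, w` for the corners of an elementary square and `V`, `H` for the coefficients of `n`
and `m` in `R`.

The heart is `sum_left`: if `Q(x, y, z, w) = 0` and `Q(x, a, z, b) = 0` are the two squares sharing
the edge `(x, z)`, then `Q_x V(n,m) + Q_z V(n,m+1)` does not depend on the outer values `a, b`; it is
a polynomial `S` in the corners of the square. Because H3 is invariant under the reflections of the
square (and, up to sign, under its transposition together with `α ↔ β`), the same lemma evaluates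
the three other edge sums: `Q_y V(n+1,m) + Q_w V(n+1,m+1) = -S`, while the bottom and top edges give
`-S'` and `S'` for `H`. So the terms proportional to `n` and `m` cancel. The shifts `n + 1` and
`m + 1` leave `-S + S'`, and the scaling part `-u/2` contributes `-(α(xy+zw) - β(xz+yw))`; these add up
to `2 Q = 0`.

For `sum_left`, put `k = α² - β²`. The biquadratics of H3 factor on solutions, e.g.
`Q_z Q_w = -k (xy + αδ)`, so after multiplication by `k` the claim lies in the ideal of the two
square equations. When `k = 0` the equation `Q = 0` degenerates to `α(x - w)(y - z) = 0` or
`α(x + w)(y + z) = 0`, and the claim is checked on each branch.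
-/

noncomputable section

/-- The denominator-free form of `sum_left`. -/
lemma edge_identity (α β δ x y z w a b : ℂ) (hp : y - a ≠ 0) (hq : w - b ≠ 0)
    (h₁ : α * (x * y + z * w) - β * (x * z + y * w) + δ * (α ^ 2 - β ^ 2) = 0)
    (h₂ : α * (x * a + z * b) - β * (x * z + a * b) + δ * (α ^ 2 - β ^ 2) = 0) :
    (α * y - β * z) * (x * y + α * δ) * (w - b) + (α * w - β * x) * (z * w + α * δ) * (y - a) =
      β * (y * w + β * δ) * (y - a) * (w - b) := by
  by_cases hk : α ^ 2 - β ^ 2 = 0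
  · obtain rfl | rfl : α = β ∨ α = -β := sq_eq_sq_iff_eq_or_eq_neg.mp (sub_eq_zero.mp hk)
    · have e₁ : α * ((x - w) * (y - z)) = 0 := by linear_combination h₁
      have e₂ : α * ((x - b) * (a - z)) = 0 := by linear_combination h₂
      rcases mul_eq_zero.mp e₁ with h | h
      · simp [h]
      rcases eq_or_ne α 0 with h0 | h0
      · simp [h0]
      have e₃ := (mul_eq_zero.mp ((mul_eq_zero.mp e₂).resolve_left h0))
      rcases mul_eq_zero.mp h with h | h
      · -- `b ≠ w = x` forces `a = z`
        have h3 : a - z = 0 := e₃.resolve_left fun h' => hq (by linear_combination h' - h)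
        obtain rfl := sub_eq_zero.mp h
        obtain rfl := sub_eq_zero.mp h3
        ring
      · -- `a ≠ y = z` forces `b = x`
        have h3 : x - b = 0 := e₃.resolve_right fun h' => hp (by linear_combination h - h')
        obtain rfl := sub_eq_zero.mp h
        obtain rfl := sub_eq_zero.mp h3
        ring
    · have e₁ : β * ((x + w) * (y + z)) = 0 := by linear_combination -h₁
      have e₂ : β * ((x + b) * (a + z)) = 0 := by linear_combination -h₂
      rcases eq_or_ne β 0 with h0 | h0
      · simp [h0]
      have e₃ := (mul_eq_zero.mp ((mul_eq_zero.mp e₂).resolve_left h0))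
      rcases mul_eq_zero.mp ((mul_eq_zero.mp e₁).resolve_left h0) with h | h
      · -- `b ≠ w = -x` forces `a = -z`
        have h3 : a + z = 0 := e₃.resolve_left fun h' => hq (by linear_combination h - h')
        obtain rfl := eq_neg_of_add_eq_zero_left h
        obtain rfl := eq_neg_of_add_eq_zero_left h3
        ring
      · -- `a ≠ y = -z` forces `b = -x`
        have h3 : x + b = 0 := e₃.resolve_right fun h' => hp (by linear_combination h - h')
        obtain rfl := eq_neg_of_add_eq_zero_left h
        obtain rfl := eq_neg_of_add_eq_zero_left h3
        ring
  · -- substitute `k(xy + αδ) = αQ - Q_z Q_w`, `k(zw + αδ) = αQ - Q_x Q_y` and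
    -- `k(yw + βδ) = Q_x Q_z + βQ`; the difference of the two square equations does the rest
    refine mul_left_cancel₀ hk ?_
    linear_combination
      (α * (α * y - β * z) * (w - b) + α * (α * w - β * x) * (y - a)
        - β ^ 2 * (y - a) * (w - b)) * h₁
      - (α * y - β * z) * (α * w - β * x) * (h₁ - h₂)

/-- The sum of the symmetry terms along the edge `(x, z)` shared by the squares `(x, y, z, w)` and
`(x, a, z, b)` is a polynomial in `x, y, z, w` alone. -/
lemma sum_left (α β δ x y z w a b : ℂ) (hp : y ≠ a) (hq : w ≠ b)
    (h₁ : α * (x * y + z * w) - β * (x * z + y * w) + δ * (α ^ 2 - β ^ 2) = 0)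
    (h₂ : α * (x * a + z * b) - β * (x * z + a * b) + δ * (α ^ 2 - β ^ 2) = 0) :
    (α * y - β * z) * ((x * (y + a) + 2 * α * δ) / (y - a)) +
      (α * w - β * x) * ((z * (w + b) + 2 * α * δ) / (w - b)) =
      2 * β * (y * w + x * z + β * δ) - α * (x * y + z * w) := by
  have hp' := sub_ne_zero.mpr hp
  have hq' := sub_ne_zero.mpr hq
  have key := edge_identity α β δ x y z w a b hp' hq' h₁ h₂
  field_simp
  linear_combination 2 * key

/-- `sum_left` with both fractions written with the opposite orientation. -/
lemma sum_right (α β δ x y z w a b : ℂ) (hp : a ≠ y) (hq : b ≠ w)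
    (h₁ : α * (x * y + z * w) - β * (x * z + y * w) + δ * (α ^ 2 - β ^ 2) = 0)
    (h₂ : α * (x * a + z * b) - β * (x * z + a * b) + δ * (α ^ 2 - β ^ 2) = 0) :
    (α * y - β * z) * ((x * (a + y) + 2 * α * δ) / (a - y)) +
      (α * w - β * x) * ((z * (b + w) + 2 * α * δ) / (b - w)) =
      -(2 * β * (y * w + x * z + β * δ) - α * (x * y + z * w)) := by
  rw [← sum_left α β δ x y z w a b hp.symm hq.symm h₁ h₂, ← neg_sub y a, ← neg_sub w b,
    div_neg, div_neg, add_comm a y, add_comm b w]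
  ring

lemma deriv_affine_s15 (f : ℂ → ℂ) (c d t : ℂ) (hf : ∀ s, f s = c * s + d) : deriv f t = c := by
  rw [show f = fun s => c * s + d from funext hf]
  simp

/-- the characteristic of the five-point generalized symmetry
`w = n·v₁ + m·v₂ − (u/2)∂_u` of H3 (with δ ≠ 0). -/
theorem statement15 (α β δ : ℂ) (hδ : δ ≠ 0) (u : ℤ → ℤ → ℂ)
    (hu : ∀ n m : ℤ, QH3 α β δ (u n m) (u (n+1) m) (u n (m+1)) (u (n+1) (m+1)) = 0)
    (hne₁ : ∀ n m : ℤ, u (n+1) m ≠ u (n-1) m)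
    (hne₂ : ∀ n m : ℤ, u n (m+1) ≠ u n (m-1))
    (R : ℤ → ℤ → ℂ)
    (hR : ∀ n m : ℤ, R n m =
      (n : ℂ) * ((u n m * (u (n+1) m + u (n-1) m) + 2 * α * δ) /
        (u (n+1) m - u (n-1) m)) +
      (m : ℂ) * ((u n m * (u n (m+1) + u n (m-1)) + 2 * β * δ) /
        (u n (m+1) - u n (m-1))) - u n m / 2) :
    ∀ n m : ℤ,
      pX (QH3 α β δ) (u n m) (u (n+1) m) (u n (m+1)) (u (n+1) (m+1)) * R n m +
      pY (QH3 α β δ) (u n m) (u (n+1) m) (u n (m+1)) (u (n+1) (m+1)) * R (n+1) m +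
      pZ (QH3 α β δ) (u n m) (u (n+1) m) (u n (m+1)) (u (n+1) (m+1)) * R n (m+1) +
      pW (QH3 α β δ) (u n m) (u (n+1) m) (u n (m+1)) (u (n+1) (m+1)) * R (n+1) (m+1) = 0 := by
  intro n m
  simp only [QH3] at hu
  have h₀ := hu n m
  have hL := hu (n - 1) m
  have hB := hu n (m - 1)
  have hRt := hu (n + 1) m
  have hT := hu n (m + 1)
  have l₁ := hne₁ n m
  have l₂ := hne₁ n (m + 1)
  have r₁ := hne₁ (n + 1) m
  have r₂ := hne₁ (n + 1) (m + 1)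
  have b₁ := hne₂ n m
  have b₂ := hne₂ (n + 1) m
  have t₁ := hne₂ n (m + 1)
  have t₂ := hne₂ (n + 1) (m + 1)
  simp only [sub_add_cancel, add_sub_cancel_right] at hL hB r₁ r₂ t₁ t₂
  rw [pX_QH3, pY_QH3, pZ_QH3, pW_QH3, hR n m, hR (n + 1) m, hR n (m + 1), hR (n + 1) (m + 1)]
  simp only [add_sub_cancel_right]
  -- the four edges of the square; the horizontal ones use the transposition symmetry, under
  -- which `Q` changes sign
  have L := sum_left α β δ _ _ _ _ _ _ l₁ l₂ h₀ (by linear_combination hL)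
  have Rt := sum_right α β δ (u (n + 1) m) (u n m) (u (n + 1) (m + 1)) (u n (m + 1)) _ _ r₁ r₂
    (by linear_combination h₀) (by linear_combination hRt)
  have B := sum_left β α δ (u n m) (u n (m + 1)) (u (n + 1) m) (u (n + 1) (m + 1)) _ _ b₁ b₂
    (by linear_combination -h₀) (by linear_combination -hB)
  have T := sum_right β α δ (u n (m + 1)) (u n m) (u (n + 1) (m + 1)) (u (n + 1) m) _ _ t₁ t₂
    (by linear_combination -h₀) (by linear_combination -hT)
  push_cast
  linear_combination (n : ℂ) * L + ((n : ℂ) + 1) * Rt - (m : ℂ) * B - ((m : ℂ) + 1) * T + 2 * h₀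
end
end

section
/- Let v₀₀, v₁₀, v₀₁, v₁₁ ∈ ℂ satisfy v₀₀ + v₁₀ + v₀₁ + v₁₁ = 0, and suppose exp(2·v_{ij}) ≠ 1 for each of the four values. Define u_{ij} := (1 + exp(2·v_{ij}))/(1 − exp(2·v_{ij})). Then u₀₀·(u₁₀·u₀₁ + u₁₀·u₁₁ + u₀₁·u₁₁) + u₁₀·u₀₁·u₁₁ + u₀₀ + u₁₀ + u₀₁ + u₁₁ = 0. That is, the transformation u = (1 + e^{2v})/(1 − e^{2v}) maps solutions of the linear lattice equation v₀₀ + v₁₀ + v₀₁ + v₁₁ = 0 to solutions of the nonlinear lattice equation u₀₀(u₁₀u₀₁ + u₁₀u₁₁ + u₀₁u₁₁) + u₁₀u₀₁u₁₁ + u₀₀ + u₁₀ + u₀₁ + u₁₁ = 0. -/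
/-! Put `xᵢ = exp (2 vᵢ)`. The substitution satisfies `uᵢ - 1 = xᵢ (uᵢ + 1)`, and the linear equation
gives `∏ xᵢ = 1`, so `∏ (uᵢ - 1) = ∏ (uᵢ + 1)`. The difference `∏ (uᵢ + 1) - ∏ (uᵢ - 1)` is twice the
odd part `e₁(u) + e₃(u)`, which is the left-hand side of the nonlinear equation. -/

theorem sub_one_eq_mul_add_one {x u : ℂ} (hx : x ≠ 1) (hu : u = (1 + x) / (1 - x)) :
    u - 1 = x * (u + 1) := by
  have h : 1 - x ≠ 0 := sub_ne_zero.mpr hx.symm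
  rw [hu]
  field_simp
  ring

/-- the transformation `u = (1 + e^{2v})/(1 − e^{2v})` maps solutions of
the linear lattice equation `v₀₀ + v₁₀ + v₀₁ + v₁₁ = 0` to solutions of the nonlinear
lattice equation `u₀₀(u₁₀u₀₁ + u₁₀u₁₁ + u₀₁u₁₁) + u₁₀u₀₁u₁₁ + u₀₀ + u₁₀ + u₀₁ + u₁₁ = 0`. -/
theorem statement18 (v₀₀ v₁₀ v₀₁ v₁₁ : ℂ)
    (hsum : v₀₀ + v₁₀ + v₀₁ + v₁₁ = 0)
    (h₀₀ : Complex.exp (2 * v₀₀) ≠ 1) (h₁₀ : Complex.exp (2 * v₁₀) ≠ 1)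
    (h₀₁ : Complex.exp (2 * v₀₁) ≠ 1) (h₁₁ : Complex.exp (2 * v₁₁) ≠ 1)
    (u₀₀ u₁₀ u₀₁ u₁₁ : ℂ)
    (hu₀₀ : u₀₀ = (1 + Complex.exp (2 * v₀₀)) / (1 - Complex.exp (2 * v₀₀)))
    (hu₁₀ : u₁₀ = (1 + Complex.exp (2 * v₁₀)) / (1 - Complex.exp (2 * v₁₀)))
    (hu₀₁ : u₀₁ = (1 + Complex.exp (2 * v₀₁)) / (1 - Complex.exp (2 * v₀₁)))
    (hu₁₁ : u₁₁ = (1 + Complex.exp (2 * v₁₁)) / (1 - Complex.exp (2 * v₁₁))) :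
    u₀₀ * (u₁₀ * u₀₁ + u₁₀ * u₁₁ + u₀₁ * u₁₁) + u₁₀ * u₀₁ * u₁₁ +
      u₀₀ + u₁₀ + u₀₁ + u₁₁ = 0 := by
  have hprod : Complex.exp (2 * v₀₀) * Complex.exp (2 * v₁₀) * Complex.exp (2 * v₀₁) *
      Complex.exp (2 * v₁₁) = 1 := by
    rw [← Complex.exp_add, ← Complex.exp_add, ← Complex.exp_add, ← mul_add, ← mul_add, ← mul_add,
      hsum, mul_zero, Complex.exp_zero]
  have key : (u₀₀ - 1) * (u₁₀ - 1) * (u₀₁ - 1) * (u₁₁ - 1) =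
      (u₀₀ + 1) * (u₁₀ + 1) * (u₀₁ + 1) * (u₁₁ + 1) := by
    rw [sub_one_eq_mul_add_one h₀₀ hu₀₀, sub_one_eq_mul_add_one h₁₀ hu₁₀,
      sub_one_eq_mul_add_one h₀₁ hu₀₁, sub_one_eq_mul_add_one h₁₁ hu₁₁]
    linear_combination (u₀₀ + 1) * (u₁₀ + 1) * (u₀₁ + 1) * (u₁₁ + 1) * hprod
  linear_combination (-1 / 2) * key
end

section
/- Let α, β ∈ ℂ with r := α − β, and let x, y, z, w ∈ ℂ satisfy the H1 relation (x − w)·(y − z) = α − β. Define the edge invariants f₁ := y − x, f₂ := w − y, f₃ := w − z, f₄ := z − x, and assume f₁ + f₂ ≠ 0. Then f₁ + f₂ = f₃ + f₄, and (f₃, f₄) is given by the quadrirational Yang–Baxter-type map R(f₁,f₂) = (f₂ − r/(f₁ + f₂), f₁ + r/(f₁ + f₂)); that is, f₃ = f₂ − r/(f₁ + f₂) and f₄ = f₁ + r/(f₁ + f₂). -/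
/-- on a single H1 quadrilateral, the edge invariants satisfy
`f₁ + f₂ = f₃ + f₄` and are related by the quadrirational Yang–Baxter map
`R(f₁,f₂) = (f₂ − r/(f₁+f₂), f₁ + r/(f₁+f₂))`, where `r = α − β`. -/
theorem statement19 (α β r x y z w : ℂ)
    (hr : r = α - β)
    (hH1 : (x - w) * (y - z) = α - β)
    (f₁ f₂ f₃ f₄ : ℂ)
    (hf₁ : f₁ = y - x) (hf₂ : f₂ = w - y) (hf₃ : f₃ = w - z) (hf₄ : f₄ = z - x)
    (hden : f₁ + f₂ ≠ 0) :
    f₁ + f₂ = f₃ + f₄ ∧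
    f₃ = f₂ - r / (f₁ + f₂) ∧
    f₄ = f₁ + r / (f₁ + f₂) := by
  -- The sum `f₁ + f₂` telescopes to `w - x`, so H1 says exactly that `r / (f₁ + f₂) = z - y`.
  have key : r / (f₁ + f₂) = z - y := by
    rw [div_eq_iff hden, hr, ← hH1, hf₁, hf₂]
    ring
  rw [key, hf₁, hf₂, hf₃, hf₄]
  refine ⟨?_, ?_, ?_⟩ <;> ring
end
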